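/- Assume (F0)-(F4), and for each ε > 0 let u_ε : [0,T] → X be a C² solution of ε² A ü_ε(t) + ε B u̇_ε(t) + ∇ₓF(t, u_ε(t)) = 0 on [0,T], with ‖u_ε(0)‖ ≤ R and ε‖u̇_ε(0)‖ ≤ R for all ε > 0. Then the functions t ↦ ε u̇_ε(t) converge to 0 in L²((0,T); X) as ε → 0; consequently, for every sequence ε_k → 0 there is a subsequence along which ε_k² ‖u̇_{ε_k}(t)‖² → 0 for almost every t ∈ [0,T]. -/

import Mathlib

open Set Filter Topology MeasureTheory
open scoped RealInnerProductSpace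

/-! The energy `E = ε² / 2 * ⟪u̇, A u̇⟫ + F(t, u)` satisfies `Ė = ∂ₜF(t, u) - ε ⟪u̇, B u̇⟫`, since
the work of the force `∇F` cancels. With `|∂ₜF| ≤ C₁ F + C₂` this is a Grönwall inequality for
`E + C₂ / C₁ ≥ 0`, and keeping the dissipation term in it bounds `ε ∫ ‖u̇‖²` by the initial energy,
uniformly in `ε`. One more factor `ε` gives `∫ ‖ε u̇‖² = O(ε)`. -/

section Subsequence

variable {α E : Type*} [MeasurableSpace α] {μ : Measure α} [NormedAddCommGroup E]

theorem exists_seq_tendsto_ae_of_tendsto_integral_norm_sub {f : ℕ → α → E} {g : α → E}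
    (hf : ∀ n, Integrable (f n) μ) (hg : Integrable g μ)
    (h : Tendsto (fun n => ∫ x, ‖f n x - g x‖ ∂μ) atTop (𝓝 0)) :
    ∃ φ : ℕ → ℕ, StrictMono φ ∧ ∀ᵐ x ∂μ, Tendsto (fun n => f (φ n) x) atTop (𝓝 (g x)) := by
  refine (tendstoInMeasure_of_tendsto_eLpNorm one_ne_zero (fun n => (hf n).aestronglyMeasurable)
    hg.aestronglyMeasurable ?_).exists_seq_tendsto_ae
  have eLpNorm_eq (n : ℕ) : eLpNorm (f n - g) 1 μ = ENNReal.ofReal (∫ x, ‖f n x - g x‖ ∂μ) := by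
    rw [eLpNorm_one_eq_lintegral_enorm]
    exact (ofReal_integral_norm_eq_lintegral_enorm ((hf n).sub hg)).symm
  simpa only [eLpNorm_eq, ENNReal.ofReal_zero] using ENNReal.tendsto_ofReal h

end Subsequence

theorem exists_pos_mul_norm_pow_le_of_homogeneous {E : Type*} [NormedAddCommGroup E]
    [NormedSpace ℝ E] [ProperSpace E] {f : E → ℝ} {n : ℕ} (hn : n ≠ 0) (hf : Continuous f)
    (hom : ∀ c : ℝ, 0 ≤ c → ∀ x, f (c • x) = c ^ n * f x) (hpos : ∀ x, x ≠ 0 → 0 < f x) :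
    ∃ m > 0, ∀ x, m * ‖x‖ ^ n ≤ f x := by
  have map_zero : f 0 = 0 := by simpa [hn] using hom 0 le_rfl 0
  rcases subsingleton_or_nontrivial E with _ | _
  · exact ⟨1, one_pos, fun x => by simp [Subsingleton.elim x 0, map_zero, hn]⟩
  obtain ⟨y, hy, hmin⟩ := (isCompact_sphere (0 : E) 1).exists_isMinOn
    (NormedSpace.sphere_nonempty.mpr zero_le_one) hf.continuousOn
  refine ⟨f y, hpos y (ne_zero_of_mem_unit_sphere ⟨y, hy⟩), fun x => ?_⟩
  rcases eq_or_ne x 0 with rfl | hx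
  · simp [map_zero, hn]
  have hx' : ‖x‖ ≠ 0 := norm_ne_zero_iff.mpr hx
  calc f y * ‖x‖ ^ n ≤ f (‖x‖⁻¹ • x) * ‖x‖ ^ n := by
        gcongr
        exact hmin (by simp [norm_smul, hx'])
    _ = f x := by
        rw [hom _ (by positivity), inv_pow]
        field_simp

theorem exists_pos_mul_norm_sq_le_inner {X : Type*} [NormedAddCommGroup X] [InnerProductSpace ℝ X]
    [ProperSpace X] {B : X →L[ℝ] X} (hB : ∀ x, x ≠ 0 → 0 < ⟪x, B x⟫) :
    ∃ b > 0, ∀ x, b * ‖x‖ ^ 2 ≤ ⟪x, B x⟫ :=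
  exists_pos_mul_norm_pow_le_of_homogeneous two_ne_zero (by fun_prop)
    (fun c _ x => by rw [map_smul, real_inner_smul_left, real_inner_smul_right]; ring) hB

theorem isPositive_of_inner_pos {X : Type*} [NormedAddCommGroup X] [InnerProductSpace ℝ X]
    {A : X →L[ℝ] X} (hsymm : (A : X →ₗ[ℝ] X).IsSymmetric) (hpos : ∀ x, x ≠ 0 → 0 < ⟪x, A x⟫) :
    A.IsPositive := by
  refine A.isPositive_iff.mpr ⟨hsymm, fun x => ?_⟩
  rcases eq_or_ne x 0 with rfl | hx
  · simp
  · exact (hpos x hx).le.trans_eq (real_inner_comm _ _)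

theorem hasDerivWithinAt_comp_curve {𝕜 E G : Type*} [NontriviallyNormedField 𝕜]
    [NormedAddCommGroup E] [NormedSpace 𝕜 E] [NormedAddCommGroup G] [NormedSpace 𝕜 G]
    {f : 𝕜 → E → G} {s : Set 𝕜} {t : 𝕜} {u : 𝕜 → E} {u' : E} {dtf : G} {dxf : E →L[𝕜] G}
    (hs : UniqueDiffWithinAt 𝕜 s t) (ht : t ∈ s)
    (hf : DifferentiableWithinAt 𝕜 (fun p : 𝕜 × E => f p.1 p.2) (s ×ˢ univ) (t, u t))
    (hft : HasDerivWithinAt (fun τ => f τ (u t)) dtf s t) (hfx : HasFDerivAt (f t) dxf (u t))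
    (hu : HasDerivWithinAt u u' s t) :
    HasDerivWithinAt (fun τ => f τ (u τ)) (dtf + dxf u') s t := by
  obtain ⟨L, hL⟩ := hf
  have along {γ : 𝕜 → E} {γ' : E} (hγt : γ t = u t) (hγ : HasDerivWithinAt γ γ' s t) :
      HasDerivWithinAt (fun τ => f τ (γ τ)) (L (1, γ')) s t :=
    hL.comp_hasDerivWithinAt_of_eq t ((hasDerivWithinAt_id t s).prodMk hγ)
      (fun τ hτ => ⟨hτ, mem_univ _⟩) (by simp [hγt])
  have time_part : L (1, 0) = dtf :=
    hs.eq_deriv _ (along (γ := fun _ => u t) rfl (hasDerivWithinAt_const t s (u t))) hft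
  have space_part : L.comp (.inr 𝕜 𝕜 E) = dxf :=
    (HasFDerivWithinAt.comp_hasFDerivAt (u t) hL (hasFDerivAt_prodMk_right t (u t))
      (.of_forall fun x => ⟨ht, mem_univ x⟩)).unique hfx
  refine (along rfl hu).congr_deriv ?_
  rw [← time_part, ← space_part, L.comp_apply, ContinuousLinearMap.inr_apply, ← map_add]
  simp

theorem integral_le_exp_mul_of_deriv_add_le {y y' d : ℝ → ℝ} {a b c : ℝ} (hab : a ≤ b) (hc : 0 ≤ c)
    (hy : ∀ t ∈ Icc a b, HasDerivWithinAt y (y' t) (Icc a b) t)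
    (hd : IntegrableOn d (Icc a b)) (hd_nonneg : ∀ t ∈ Ioo a b, 0 ≤ d t)
    (hle : ∀ t ∈ Ioo a b, y' t + d t ≤ c * y t) (hyb : 0 ≤ y b) :
    ∫ t in a..b, d t ≤ Real.exp (c * (b - a)) * y a := by
  let g (t : ℝ) : ℝ := -(Real.exp (c * (b - t)) * y t)
  let g' (t : ℝ) : ℝ := Real.exp (c * (b - t)) * (c * y t - y' t)
  have hg (t : ℝ) (ht : t ∈ Icc a b) : HasDerivWithinAt g (g' t) (Icc a b) t := by
    have hexp := (((hasDerivWithinAt_id t (Icc a b)).const_sub b).const_mul c).exp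
    refine (hexp.mul (hy t ht)).neg.congr_deriv ?_
    simp only [id, g']
    ring
  have d_le_g' (t : ℝ) (ht : t ∈ Ioo a b) : d t ≤ g' t := by
    have one_le_exp : 1 ≤ Real.exp (c * (b - t)) :=
      Real.one_le_exp (mul_nonneg hc (sub_nonneg.mpr ht.2.le))
    calc d t ≤ Real.exp (c * (b - t)) * d t := le_mul_of_one_le_left (hd_nonneg t ht) one_le_exp
      _ ≤ g' t := mul_le_mul_of_nonneg_left (by linarith [hle t ht]) (Real.exp_pos _).le
  have integral_le : ∫ t in a..b, d t ≤ g b - g a :=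
    intervalIntegral.integral_le_sub_of_hasDeriv_right_of_le hab
      (fun t ht => (hg t ht).continuousWithinAt)
      (fun t ht => ((hg t (Ioo_subset_Icc_self ht)).hasDerivAt
        (Icc_mem_nhds ht.1 ht.2)).hasDerivWithinAt) hd d_le_g'
  simp only [g, sub_self, mul_zero, Real.exp_zero, one_mul] at integral_le
  linarith

section DampedMotion

variable {X : Type*} [NormedAddCommGroup X] [InnerProductSpace ℝ X] {A B : X →L[ℝ] X}

/-- The motion `u` solves the damped second order equation `ε² A ü + ε B u̇ + G(t, u) = 0` on `s`.
Its velocity `v` and acceleration `w` are derivatives within `s`, hence one-sided at the endpoints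
of an interval. -/
structure IsDampedMotion (A B : X →L[ℝ] X) (G : ℝ → X → X) (s : Set ℝ) (ε : ℝ) (u v w : ℝ → X) :
    Prop where
  hasDerivWithinAt_position : ∀ t ∈ s, HasDerivWithinAt u (v t) s t
  hasDerivWithinAt_velocity : ∀ t ∈ s, HasDerivWithinAt v (w t) s t
  balance : ∀ t ∈ s, ε ^ 2 • A (w t) + ε • B (v t) + G t (u t) = 0

/-- The total energy at position `x` and velocity `v`, with mass operator `ε² A` and potential
`V`. -/
noncomputable def energy (A : X →L[ℝ] X) (V : X → ℝ) (ε : ℝ) (x v : X) : ℝ :=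
  ε ^ 2 / 2 * ⟪v, A v⟫ + V x

theorem potential_le_energy (hA : A.IsPositive) (V : X → ℝ) (ε : ℝ) (x v : X) :
    V x ≤ energy A V ε x v :=
  le_add_of_nonneg_left (mul_nonneg (by positivity) (hA.inner_nonneg_right v))

theorem exists_energy_le [ProperSpace X] (A : X →L[ℝ] X) {V : X → ℝ} (hV : Continuous V) (R : ℝ) :
    ∃ K, ∀ ε x v, 0 ≤ ε → ‖x‖ ≤ R → ε * ‖v‖ ≤ R → energy A V ε x v ≤ K := by
  have hcont : Continuous fun p : X × X => energy A V 1 p.1 p.2 := by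
    unfold energy
    fun_prop
  obtain ⟨K, hK⟩ := ((isCompact_closedBall (0 : X) R).prod
    (isCompact_closedBall (0 : X) R)).bddAbove_image hcont.continuousOn
  refine ⟨K, fun ε x v hε hx hv => ?_⟩
  have rescale : energy A V ε x v = energy A V 1 x (ε • v) := by
    simp only [energy, map_smul, real_inner_smul_left, real_inner_smul_right]
    ring
  rw [rescale]
  exact hK ⟨(x, ε • v), by simpa [norm_smul, abs_of_nonneg hε] using ⟨hx, hv⟩, rfl⟩

variable [CompleteSpace X] {F dtF : ℝ → X → ℝ} {gradF : ℝ → X → X} {ε : ℝ} {u v w : ℝ → X}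

theorem IsDampedMotion.hasDerivWithinAt_energy {s : Set ℝ} {t : ℝ}
    (hu : IsDampedMotion A B gradF s ε u v w) (hA : (A : X →ₗ[ℝ] X).IsSymmetric)
    (hs : UniqueDiffWithinAt ℝ s t) (ht : t ∈ s)
    (hF : DifferentiableWithinAt ℝ (fun p : ℝ × X => F p.1 p.2) (s ×ˢ univ) (t, u t))
    (hdtF : HasDerivWithinAt (fun τ => F τ (u t)) (dtF t (u t)) s t)
    (hgradF : HasGradientAt (F t) (gradF t (u t)) (u t)) :
    HasDerivWithinAt (fun τ => energy A (F τ) ε (u τ) (v τ))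
      (dtF t (u t) - ε * ⟪v t, B (v t)⟫) s t := by
  have hv := hu.hasDerivWithinAt_velocity t ht
  have kinetic : HasDerivWithinAt (fun τ => ε ^ 2 / 2 * ⟪v τ, A (v τ)⟫)
      (ε ^ 2 * ⟪v t, A (w t)⟫) s t := by
    have symm : ⟪w t, A (v t)⟫ = ⟪v t, A (w t)⟫ := (hA _ _).symm.trans (real_inner_comm _ _)
    refine ((hv.inner ℝ (A.hasFDerivAt.comp_hasDerivWithinAt t hv)).const_mul _).congr_deriv ?_
    rw [Function.comp_apply, symm]
    ring
  have potential : HasDerivWithinAt (fun τ => F τ (u τ))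
      (dtF t (u t) + ⟪v t, gradF t (u t)⟫) s t := by
    simpa only [InnerProductSpace.toDual_apply_apply, real_inner_comm] using
      hasDerivWithinAt_comp_curve hs ht hF hdtF hgradF.hasFDerivAt
        (hu.hasDerivWithinAt_position t ht)
  have power_balance : ε ^ 2 * ⟪v t, A (w t)⟫ + ε * ⟪v t, B (v t)⟫ + ⟪v t, gradF t (u t)⟫ = 0 := by
    simpa only [inner_add_right, real_inner_smul_right, inner_zero_right] using
      congrArg (fun z => ⟪v t, z⟫) (hu.balance t ht)
  refine (kinetic.add potential).congr_deriv ?_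
  linarith

variable {b C₁ C₂ T : ℝ}

theorem IsDampedMotion.integral_norm_smul_velocity_sq_le
    (hu : IsDampedMotion A B gradF (Icc 0 T) ε u v w)
    (hA : A.IsPositive) (hb : 0 < b) (hB : ∀ x, b * ‖x‖ ^ 2 ≤ ⟪x, B x⟫) (hT : 0 < T)
    (hF : DifferentiableOn ℝ (fun p : ℝ × X => F p.1 p.2) (Icc 0 T ×ˢ univ))
    (hgradF : ∀ t ∈ Icc 0 T, ∀ x, HasGradientAt (F t) (gradF t x) x)
    (hdtF : ∀ x, ∀ t ∈ Icc 0 T, HasDerivWithinAt (fun τ => F τ x) (dtF t x) (Icc 0 T) t)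
    (hC₁ : 0 < C₁) (hdtF_le : ∀ t ∈ Icc 0 T, ∀ x, |dtF t x| ≤ C₁ * F t x + C₂) (hε : 0 ≤ ε) :
    ∫ t in (0 : ℝ)..T, ‖ε • v t‖ ^ 2 ≤
      ε * (Real.exp (C₁ * T) * (energy A (F 0) ε (u 0) (v 0) + C₂ / C₁) / b) := by
  have hv : ContinuousOn v (Icc 0 T) := fun t ht =>
    (hu.hasDerivWithinAt_velocity t ht).continuousWithinAt
  have energy_bound (t : ℝ) (ht : t ∈ Icc 0 T) :
      |dtF t (u t)| ≤ C₁ * (energy A (F t) ε (u t) (v t) + C₂ / C₁) := by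
    rw [mul_add, mul_div_cancel₀ C₂ hC₁.ne']
    exact (hdtF_le t ht (u t)).trans (by gcongr; exact potential_le_energy hA _ _ _ _)
  have dissipation : ∫ t in (0 : ℝ)..T, ε * b * ‖v t‖ ^ 2 ≤
      Real.exp (C₁ * (T - 0)) * (energy A (F 0) ε (u 0) (v 0) + C₂ / C₁) := by
    refine integral_le_exp_mul_of_deriv_add_le hT.le hC₁.le
      (fun t ht => (hu.hasDerivWithinAt_energy hA.isSymmetric (uniqueDiffOn_Icc hT t ht) ht
        (hF _ ⟨ht, mem_univ _⟩) (hdtF _ t ht) (hgradF t ht _)).add_const _)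
      (continuousOn_const.mul (hv.norm.pow 2)).integrableOn_Icc
      (fun t _ => by positivity) (fun t ht => ?_) ?_
    · have := (le_abs_self _).trans (energy_bound t (Ioo_subset_Icc_self ht))
      have := mul_le_mul_of_nonneg_left (hB (v t)) hε
      linarith
    · exact nonneg_of_mul_nonneg_right
        ((abs_nonneg _).trans (energy_bound T (right_mem_Icc.mpr hT.le))) hC₁
  calc ∫ t in (0 : ℝ)..T, ‖ε • v t‖ ^ 2 = ε * ((∫ t in (0 : ℝ)..T, ε * b * ‖v t‖ ^ 2) / b) := by
        simp only [norm_smul, Real.norm_of_nonneg hε, mul_pow, intervalIntegral.integral_const_mul]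
        field_simp
    _ ≤ _ := by
        rw [sub_zero] at dissipation
        gcongr

end DampedMotion

theorem exists_seq_ae_tendsto_sq_mul_norm_sq {X : Type*} [NormedAddCommGroup X] [NormedSpace ℝ X]
    {v : ℝ → ℝ → X} {a b : ℝ} (hab : a ≤ b) (hv : ∀ ε > 0, ContinuousOn (v ε) (Icc a b))
    (h : Tendsto (fun ε : ℝ => ∫ t in a..b, ‖ε • v ε t‖ ^ 2) (𝓝[>] 0) (𝓝 0))
    {εs : ℕ → ℝ} (hpos : ∀ k, 0 < εs k) (hεs : Tendsto εs atTop (𝓝 0)) :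
    ∃ φ : ℕ → ℕ, StrictMono φ ∧ ∀ᵐ t ∂(volume.restrict (Icc a b)),
      Tendsto (fun k => εs (φ k) ^ 2 * ‖v (εs (φ k)) t‖ ^ 2) atTop (𝓝 0) := by
  refine exists_seq_tendsto_ae_of_tendsto_integral_norm_sub
    (f := fun k t => εs k ^ 2 * ‖v (εs k) t‖ ^ 2) (g := 0)
    (fun k => (continuousOn_const.mul ((hv _ (hpos k)).norm.pow 2)).integrableOn_Icc)
    (integrable_zero _ _ _) ?_
  refine (h.comp (tendsto_nhdsWithin_iff.mpr ⟨hεs, .of_forall hpos⟩)).congr fun k => ?_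
  simp [intervalIntegral.integral_of_le hab, integral_Icc_eq_integral_Ioc, norm_smul, mul_pow]

theorem eps_velocity_to_zero_general
    {X : Type*} [NormedAddCommGroup X] [InnerProductSpace ℝ X] [CompleteSpace X]
    {A B : X →L[ℝ] X} (hA : A.IsPositive)
    {b : ℝ} (hb : 0 < b) (hB : ∀ x, b * ‖x‖ ^ 2 ≤ ⟪x, B x⟫)
    {T : ℝ} (hT : 0 < T) {F dtF : ℝ → X → ℝ} {gradF : ℝ → X → X}
    (hF : DifferentiableOn ℝ (fun p : ℝ × X => F p.1 p.2) (Icc 0 T ×ˢ univ))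
    (hgradF : ∀ t ∈ Icc 0 T, ∀ x, HasGradientAt (F t) (gradF t x) x)
    (hdtF : ∀ x, ∀ t ∈ Icc 0 T, HasDerivWithinAt (fun τ => F τ x) (dtF t x) (Icc 0 T) t)
    {C₁ C₂ : ℝ} (hC₁ : 0 < C₁) (hdtF_le : ∀ t ∈ Icc 0 T, ∀ x, |dtF t x| ≤ C₁ * F t x + C₂)
    {u v w : ℝ → ℝ → X}
    (hu : ∀ ε > 0, IsDampedMotion A B gradF (Icc 0 T) ε (u ε) (v ε) (w ε))
    {E₀ : ℝ} (hE₀ : ∀ ε > 0, energy A (F 0) ε (u ε 0) (v ε 0) ≤ E₀) :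
    Tendsto (fun ε : ℝ => ∫ t in (0 : ℝ)..T, ‖ε • v ε t‖ ^ 2) (𝓝[>] 0) (𝓝 0) ∧
    ∀ εs : ℕ → ℝ, (∀ k, 0 < εs k) → Tendsto εs atTop (𝓝 0) →
      ∃ φ : ℕ → ℕ, StrictMono φ ∧ ∀ᵐ t ∂(volume.restrict (Icc 0 T)),
        Tendsto (fun k => εs (φ k) ^ 2 * ‖v (εs (φ k)) t‖ ^ 2) atTop (𝓝 0) := by
  have bound_tendsto : Tendsto (fun ε : ℝ => ε * (Real.exp (C₁ * T) * (E₀ + C₂ / C₁) / b))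
      (𝓝[>] 0) (𝓝 0) :=
    ((continuous_mul_const _).tendsto' 0 0 (zero_mul _)).mono_left nhdsWithin_le_nhds
  have hlim : Tendsto (fun ε : ℝ => ∫ t in (0 : ℝ)..T, ‖ε • v ε t‖ ^ 2) (𝓝[>] 0) (𝓝 0) := by
    refine squeeze_zero' (.of_forall fun ε => intervalIntegral.integral_nonneg hT.le
      fun t _ => by positivity) ?_ bound_tendsto
    filter_upwards [self_mem_nhdsWithin] with ε (hε : 0 < ε)
    refine ((hu ε hε).integral_norm_smul_velocity_sq_le hA hb hB hT hF hgradF hdtF hC₁ hdtF_le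
      hε.le).trans ?_
    gcongr
    exact hE₀ ε hε
  exact ⟨hlim, fun εs hpos hεs => exists_seq_ae_tendsto_sq_mul_norm_sq hT.le
    (fun ε hε t ht => ((hu ε hε).hasDerivWithinAt_velocity t ht).continuousWithinAt)
    hlim hpos hεs⟩

/-- The functions `t ↦ ε u̇_ε(t)` converge to `0` in `L²((0,T);X)` as `ε → 0`; consequently,
along a subsequence of any sequence `ε_k → 0`, `ε_k² ‖u̇_{ε_k}(t)‖² → 0` for a.e. `t ∈ [0,T]`. -/
theorem eps_velocity_to_zero
    {X : Type*} [NormedAddCommGroup X] [InnerProductSpace ℝ X] [FiniteDimensional ℝ X]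
    (A B : X →L[ℝ] X)
    (hAsymm : ∀ x y : X, ⟪A x, y⟫ = ⟪x, A y⟫)
    (hApos : ∀ x : X, x ≠ 0 → 0 < ⟪x, A x⟫)
    (hBsymm : ∀ x y : X, ⟪B x, y⟫ = ⟪x, B y⟫)
    (hBpos : ∀ x : X, x ≠ 0 → 0 < ⟪x, B x⟫)
    (T : ℝ) (hT : 0 < T)
    (F dtF : ℝ → X → ℝ) (gradF : ℝ → X → X)
    -- (F0)
    (hF0 : ContDiffOn ℝ 1 (fun p : ℝ × X => F p.1 p.2) (Set.Icc 0 T ×ˢ Set.univ))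
    (hgradF : ∀ t ∈ Set.Icc 0 T, ∀ x : X, HasGradientAt (F t) (gradF t x) x)
    (hdtF : ∀ x : X, ∀ t ∈ Set.Icc 0 T,
      HasDerivWithinAt (fun τ => F τ x) (dtF t x) (Set.Icc 0 T) t)
    -- (F1)
    (hF1 : ∀ ρ > (0 : ℝ), Bornology.IsBounded {x : X | ∀ t ∈ Set.Icc 0 T, |F t x| ≤ ρ})
    -- (F2)
    (C₁ C₂ : ℝ) (hC₁ : 0 < C₁) (hC₂ : 0 < C₂)
    (hF2 : ∀ t ∈ Set.Icc 0 T, ∀ x : X, |dtF t x| ≤ C₁ * F t x + C₂)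
    -- (F3)
    (dtgradF : ℝ → X → X)
    (hdtgradF : ∀ x : X, ∀ t ∈ Set.Icc 0 T,
      HasDerivWithinAt (fun τ => gradF τ x) (dtgradF t x) (Set.Icc 0 T) t)
    (hF3 : ∀ M > (0 : ℝ), ∃ a : ℝ → ℝ, MeasureTheory.IntegrableOn a (Set.Icc 0 T) ∧
      ∀ t ∈ Set.Icc 0 T, ∀ x : X, ‖x‖ ≤ M → ‖dtgradF t x‖ ≤ a t)
    -- (F4)
    (hessF : ℝ → X → X →L[ℝ] X)
    (hF4 : ∀ t ∈ Set.Icc 0 T, ContDiff ℝ 2 (F t))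
    (hhessF : ∀ t ∈ Set.Icc 0 T, ∀ x : X, HasFDerivAt (gradF t) (hessF t x) x)
    (hhessFc : ContinuousOn (fun p : ℝ × X => hessF p.1 p.2) (Set.Icc 0 T ×ˢ Set.univ))
    -- the family of solutions u_ε, with derivatives u'_ε, u''_ε
    (u u' u'' : ℝ → ℝ → X)
    (hu' : ∀ ε > (0 : ℝ), ∀ t ∈ Set.Icc 0 T, HasDerivWithinAt (u ε) (u' ε t) (Set.Icc 0 T) t)
    (hu'' : ∀ ε > (0 : ℝ), ∀ t ∈ Set.Icc 0 T, HasDerivWithinAt (u' ε) (u'' ε t) (Set.Icc 0 T) t)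
    (hu''c : ∀ ε > (0 : ℝ), ContinuousOn (u'' ε) (Set.Icc 0 T))
    (hode : ∀ ε > (0 : ℝ), ∀ t ∈ Set.Icc 0 T,
      ε ^ 2 • A (u'' ε t) + ε • B (u' ε t) + gradF t (u ε t) = 0)
    -- uniformly bounded initial data
    (R : ℝ) (hR : 0 < R)
    (hinit : ∀ ε > (0 : ℝ), ‖u ε 0‖ ≤ R ∧ ε * ‖u' ε 0‖ ≤ R) :
    -- ε u̇_ε → 0 in L²((0,T);X)
    Filter.Tendsto (fun ε : ℝ => ∫ t in (0 : ℝ)..T, ‖ε • u' ε t‖ ^ 2) (𝓝[>] 0) (𝓝 0) ∧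
    -- a.e. convergence along a subsequence of any vanishing sequence
    ∀ εs : ℕ → ℝ, (∀ k, 0 < εs k) → Filter.Tendsto εs Filter.atTop (𝓝 0) →
      ∃ φ : ℕ → ℕ, StrictMono φ ∧
        ∀ᵐ t ∂(MeasureTheory.volume.restrict (Set.Icc (0 : ℝ) T)),
          Filter.Tendsto (fun k => (εs (φ k)) ^ 2 * ‖u' (εs (φ k)) t‖ ^ 2)
            Filter.atTop (𝓝 0) := by
  obtain ⟨b, hb, hB⟩ := exists_pos_mul_norm_sq_le_inner hBpos
  obtain ⟨E₀, hE₀⟩ := exists_energy_le A (hF4 0 (left_mem_Icc.mpr hT.le)).continuous R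
  exact eps_velocity_to_zero_general (isPositive_of_inner_pos hAsymm hApos) hb hB hT
    hF0.differentiableOn_one hgradF hdtF hC₁ hF2
    (fun ε hε => ⟨hu' ε hε, hu'' ε hε, hode ε hε⟩)
    (fun ε hε => hE₀ ε _ _ hε.le (hinit ε hε).1 (hinit ε hε).2)
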